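/- For every k ≥ 1 and every γ̃ ∈ Γ̃^k(A,M): (a) ψ^k(γ̃) lies in C̄^k(A,M); (b) the kernel of ψ^k is exactly ∂Γ̃^k(A,M), so ψ^k induces an injective 𝔽-linear map ψ^k: Γ^k(A,M) = Γ̃^k/∂Γ̃^k ↪ C̄^k(A,M) ⊆ C^k(A,M). -/

import Mathlib

namespace LCC

/-! ### Index utilities -/

/-- Skip one index: the increasing enumeration of `{0,…,k} \ {i}`. -/
def skip1 (i r : ℕ) : ℕ := if r < i then r else r + 1

/-- Skip two indices `i < j`: the increasing enumeration of `{0,…,k+1} \ {i,j}`. -/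
def skip2 (i j r : ℕ) : ℕ := if r < i then r else if r + 1 < j then r + 1 else r + 2

/-- Remove the `i`-th entry of a tuple. -/
def rm1 {α : Type*} {k : ℕ} (i : ℕ) (a : Fin (k+1) → α) : Fin k → α :=
  fun r => a ⟨skip1 i r.1, by have := r.2; unfold skip1; split <;> omega⟩

/-- Remove the `i`-th and `j`-th entries (for `i < j`) of a tuple. -/
def rm2 {α : Type*} {k : ℕ} (i j : ℕ) (a : Fin (k+2) → α) : Fin k → α :=
  fun r => a ⟨skip2 i j r.1, by
    have := r.2; unfold skip2; split
    · omega
    · split <;> omega⟩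

/-- Total weight of a multi-index. -/
def wt {k : ℕ} (ν : Fin k → ℕ) : ℕ := ∑ r, ν r

/-- The multinomial coefficient `(|m| + s)! / (∏ mᵣ! · s!)`. -/
def mnom {K : ℕ} (m : Fin K → ℕ) (s : ℕ) : ℕ :=
  (wt m + s).factorial / ((∏ r, (m r).factorial) * s.factorial)

variable (F : Type*) [Field F]

/-- A Lie conformal algebra over `F`: an `F[∂]`-module `A` (given by the linear
endomorphism `D`), together with a `λ`-bracket recorded through its coefficients:
`[a_λ b] = ∑ₙ (br a b n) λⁿ`, satisfying sesquilinearity, skew-symmetry and the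
Jacobi identity (all written in terms of coefficients of the `λ`-expansions). -/
structure LCA (A : Type*) [AddCommGroup A] [Module F A] where
  D : A →ₗ[F] A
  br : A →ₗ[F] A →ₗ[F] (ℕ → A)
  br_fin : ∀ a b, (Function.support (br a b)).Finite
  sesq_left_zero : ∀ a b, br (D a) b 0 = 0
  sesq_left : ∀ a b n, br (D a) b (n+1) = - br a b n
  sesq_right : ∀ a b n, br a (D b) n
      = D (br a b n) + (if n = 0 then 0 else br a b (n-1))
  skew : ∀ a b m, br a b m
      = - ∑ᶠ n, ((-1 : F)^n * (n.choose m : F)) • ((D ^ (n - m)) (br b a n))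
  jacobi : ∀ a b c m n,
      br a (br b c n) m - br b (br a c m) n
        = ∑ j ∈ Finset.range (m+1), (((n+j).choose j : F)) • br (br a b (m-j)) c (n+j)

/-- A module over a Lie conformal algebra: an `F[∂]`-module `M` with a `λ`-action
of `A`, given through the coefficients `a_λ v = ∑ₙ (act a v n) λⁿ`, satisfying
sesquilinearity and the Jacobi identity. -/
structure LCAMod {A : Type*} [AddCommGroup A] [Module F A] (L : LCA F A)
    (M : Type*) [AddCommGroup M] [Module F M] where
  D : M →ₗ[F] M
  act : A →ₗ[F] M →ₗ[F] (ℕ → M)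
  act_fin : ∀ a m, (Function.support (act a m)).Finite
  sesq_left_zero : ∀ a m, act (L.D a) m 0 = 0
  sesq_left : ∀ a m n, act (L.D a) m (n+1) = - act a m n
  sesq_right : ∀ a m n, act a (D m) n
      = D (act a m n) + (if n = 0 then 0 else act a m (n-1))
  jacobi : ∀ a b v p q,
      act a (act b v q) p - act b (act a v p) q
        = ∑ j ∈ Finset.range (p+1), (((q+j).choose j : F)) • act (L.br a b (p-j)) v (q+j)

variable {F}
variable {A M : Type*} [AddCommGroup A] [Module F A] [AddCommGroup M] [Module F M]

/-- Torsion elements of the `F[∂]`-module `A`. -/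
def IsTor (L : LCA F A) (x : A) : Prop :=
  ∃ p : Polynomial F, p ≠ 0 ∧ Polynomial.aeval L.D p x = 0

/-- `A` decomposes, as an `F[∂]`-module, into the direct sum of its torsion and
a free complementary submodule `F[∂] ⊗ U`. -/
def Decomposes (L : LCA F A) : Prop :=
  ∃ U : Submodule F A, Function.Bijective
    (fun p : {x : A // IsTor L x} × (ℕ →₀ U) =>
      (p.1 : A) + p.2.sum (fun n u => (L.D ^ n) (u : A)))

variable {L : LCA F A}

/-- The condition for a coefficient family
`γ : A^{⊗ k} → F[λ₁,…,λ_k] ⊗ M` (recorded via the coefficients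
`γ a ν` of `λ^ν`) to be a basic `k`-cochain: `F`-multilinearity, polynomiality,
sesquilinearity (A1) and skew-symmetry (A2). -/
structure IsGamma (R : LCAMod F L M) (k : ℕ)
    (γ : (Fin k → A) → (Fin k → ℕ) → M) : Prop where
  map_add : ∀ (a : Fin k → A) (i : Fin k) (x y : A),
    γ (Function.update a i (x + y)) = γ (Function.update a i x) + γ (Function.update a i y)
  map_smul : ∀ (a : Fin k → A) (i : Fin k) (r : F) (x : A),
    γ (Function.update a i (r • x)) = r • γ (Function.update a i x)
  fin : ∀ a, (Function.support (γ a)).Finite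
  sesq : ∀ (a : Fin k → A) (i : Fin k) (x : A) (ν : Fin k → ℕ),
    γ (Function.update a i (L.D x)) ν
      = (if ν i = 0 then 0 else - γ (Function.update a i x) (Function.update ν i (ν i - 1)))
  skew : ∀ (a : Fin k → A) (ν : Fin k → ℕ) (σ : Equiv.Perm (Fin k)),
    γ (a ∘ σ) (ν ∘ σ) = ((Equiv.Perm.sign σ : ℤˣ) : ℤ) • γ a ν

/-- The action of `∂` on basic cochains: `(∂γ) = (∂^M + λ₁ + ⋯ + λ_k) ∘ γ`,
in terms of coefficients. -/
def GammaD (R : LCAMod F L M) {k : ℕ} (γ : (Fin k → A) → (Fin k → ℕ) → M) :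
    (Fin k → A) → (Fin k → ℕ) → M :=
  fun a ν => R.D (γ a ν)
    + ∑ i : Fin k, (if ν i = 0 then 0 else γ a (Function.update ν i (ν i - 1)))

/-- Substitution of the auxiliary variable `μ` by
`λ† = −λ₁ − ⋯ − λ_K − ∂^M` (with `∂^M` moved to the left) in a polynomial
`q` in `λ₁,…,λ_K, μ`, recorded through its coefficients `q ρ n` of `λ^ρ μ^n`.
The result is the coefficient of `λ^ν`. -/
noncomputable def substDag {K : ℕ} (DM : M →ₗ[F] M)
    (q : (Fin K → ℕ) → ℕ → M) (ν : Fin K → ℕ) : M :=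
  ∑ ρ ∈ Finset.Iic ν, ∑ᶠ s : ℕ,
    (((-1 : F)^(wt (fun r => ν r - ρ r) + s)) * (mnom (fun r => ν r - ρ r) s : F)) •
      ((DM ^ s) (q ρ (wt (fun r => ν r - ρ r) + s)))

/-- The condition for a coefficient family
`c : A^{⊗(k+1)} → F[λ₁,…,λ_k] ⊗ M` to be a `(k+1)`-`λ`-bracket
(an element of `C^{k+1}(A,M)`), i.e. conditions B1, B2, B3 of the paper,
written in terms of the coefficients `c a ν` of `λ^ν`. -/
structure IsCBr (R : LCAMod F L M) (k : ℕ)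
    (c : (Fin (k+1) → A) → (Fin k → ℕ) → M) : Prop where
  map_add : ∀ (a : Fin (k+1) → A) (i : Fin (k+1)) (x y : A),
    c (Function.update a i (x + y)) = c (Function.update a i x) + c (Function.update a i y)
  map_smul : ∀ (a : Fin (k+1) → A) (i : Fin (k+1)) (r : F) (x : A),
    c (Function.update a i (r • x)) = r • c (Function.update a i x)
  fin : ∀ a, (Function.support (c a)).Finite
  sesq₁ : ∀ (a : Fin (k+1) → A) (i : Fin k) (x : A) (ν : Fin k → ℕ),
    c (Function.update a i.castSucc (L.D x)) ν
      = (if ν i = 0 then 0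
         else - c (Function.update a i.castSucc x) (Function.update ν i (ν i - 1)))
  sesq₂ : ∀ (a : Fin (k+1) → A) (x : A) (ν : Fin k → ℕ),
    c (Function.update a (Fin.last k) (L.D x)) ν
      = R.D (c (Function.update a (Fin.last k) x) ν)
        + ∑ i : Fin k, (if ν i = 0 then 0
            else c (Function.update a (Fin.last k) x) (Function.update ν i (ν i - 1)))
  skew : ∀ (a : Fin (k+1) → A) (ν : Fin k → ℕ) (σ : Equiv.Perm (Fin (k+1))),
    c a ν = ((Equiv.Perm.sign σ : ℤˣ) : ℤ) • substDag R.D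
      (fun ρ n =>
        if (Fin.snoc ρ n : Fin (k+1) → ℕ) (σ (Fin.last k)) = 0 then
          c (a ∘ σ) (fun i : Fin k => (Fin.snoc ρ n : Fin (k+1) → ℕ) (σ i.castSucc))
        else 0) ν

/-- The subspace `C̄`: poly-`λ`-brackets vanishing whenever one of the arguments is
a torsion element of `A`. -/
def VanishOnTorsion (L : LCA F A) {k : ℕ}
    (c : (Fin (k+1) → A) → (Fin k → ℕ) → M) : Prop :=
  ∀ a ν, (∃ i, IsTor L (a i)) → c a ν = 0

/-- The differential `d : C⁰ = M/∂M → C¹`, `(d∫m)(a) = a_{−∂^M} m`. -/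
noncomputable def dZero (R : LCAMod F L M) (m : M) :
    (Fin 1 → A) → (Fin 0 → ℕ) → M :=
  fun a _ => ∑ᶠ n, ((-1 : F)^n) • ((R.D ^ n) (R.act (a 0) m n))

/-- The second term of the differential `d` of the complex of
poly-`λ`-brackets (the double sum over `i < j` in the paper's formula). -/
noncomputable def dPair (L : LCA F A) (R : LCAMod F L M) :
    ∀ {k : ℕ}, ((Fin (k+1) → A) → (Fin k → ℕ) → M) →
      (Fin (k+2) → A) → (Fin (k+1) → ℕ) → M
  | 0, _, _, _ => 0
  | (s+1), c, a, ν =>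
    ∑ i : Fin (s+2), ∑ j : Fin (s+2),
      if i < j then
        ((-1 : F)^(s + i.1 + j.1 + 1)) •
          ∑ p ∈ Finset.range (ν i + 1),
            substDag R.D
              (fun ρ n =>
                if ρ i = 0 ∧ ρ j = 0 then
                  c (Fin.snoc (Fin.snoc (rm2 i.1 j.1 (Fin.init a)) (a (Fin.last (s+2))))
                      (L.br (a i.castSucc) (a j.castSucc) p))
                    (Fin.snoc (rm2 i.1 j.1 ρ) n)
                else 0)
              (Function.update ν i (ν i - p))
      else 0

/-- The differential `d` on the complex `C^•(A,M)` of poly-`λ`-brackets,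
written in terms of coefficients (formula (1.8) of the paper). Here `c` is a
`(k+1)`-`λ`-bracket and `dRaw c` is a `(k+2)`-`λ`-bracket. -/
noncomputable def dRaw (L : LCA F A) (R : LCAMod F L M) {k : ℕ}
    (c : (Fin (k+1) → A) → (Fin k → ℕ) → M) :
    (Fin (k+2) → A) → (Fin (k+1) → ℕ) → M :=
  fun a ν =>
    (∑ i : Fin (k+1), ((-1 : F)^i.1) •
        R.act (a i.castSucc) (c (rm1 i.1 a) (rm1 i.1 ν)) (ν i))
    + dPair L R c a ν
    + ((-1 : F)^(k+1)) • substDag R.D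
        (fun ρ n =>
          if ρ (Fin.last k) = 0 then
            R.act (a (Fin.last (k+1))) (c (Fin.init a) (Fin.init ρ)) n
          else 0) ν
    + ∑ i : Fin (k+1), ((-1 : F)^(i.1+1)) •
        c (Fin.snoc (rm1 i.1 (Fin.init a)) (L.br (a i.castSucc) (a (Fin.last (k+1))) (ν i)))
          (rm1 i.1 ν)

/-- The second term of the differential `δ` of the basic complex
`Γ̃^•(A,M)` (the double sum over `i < j`). -/
noncomputable def deltaPair (L : LCA F A) (R : LCAMod F L M) :
    ∀ {k : ℕ}, ((Fin k → A) → (Fin k → ℕ) → M) →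
      (Fin (k+1) → A) → (Fin (k+1) → ℕ) → M
  | 0, _, _, _ => 0
  | (s+1), γ, a, ν =>
    ∑ i : Fin (s+2), ∑ j : Fin (s+2),
      if i < j then
        ((-1 : F)^(s + i.1 + j.1)) •
          ∑ p ∈ Finset.range (ν i + 1),
            ((((ν i - p) + ν j).choose (ν i - p) : F)) •
              γ (Fin.snoc (rm2 i.1 j.1 a) (L.br (a i) (a j) p))
                (Fin.snoc (rm2 i.1 j.1 ν) ((ν i - p) + ν j))
      else 0

/-- The differential `δ` of the basic Lie conformal algebra cohomology complex
`Γ̃^•(A,M)`, written in terms of coefficients of the `λ`-expansions. -/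
noncomputable def deltaRaw (L : LCA F A) (R : LCAMod F L M) {k : ℕ}
    (γ : (Fin k → A) → (Fin k → ℕ) → M) :
    (Fin (k+1) → A) → (Fin (k+1) → ℕ) → M :=
  fun a ν =>
    (∑ i : Fin (k+1), ((-1 : F)^i.1) •
        R.act (a i) (γ (rm1 i.1 a) (rm1 i.1 ν)) (ν i))
    + deltaPair L R γ a ν

/-- The map `ψ^{k+1} : Γ̃^{k+1}(A,M) → C^{k+1}(A,M)`,
`{a₁ λ₁ ⋯ a_k λ_k a_{k+1}}_{ψ(γ)} = γ_{λ₁,…,λ_k,λ†}(a₁,…,a_{k+1})`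
where `λ† = −λ₁ − ⋯ − λ_k − ∂^M` (with `∂^M` moved to the left). -/
noncomputable def psiRaw (R : LCAMod F L M) {k : ℕ}
    (γ : (Fin (k+1) → A) → (Fin (k+1) → ℕ) → M) :
    (Fin (k+1) → A) → (Fin k → ℕ) → M :=
  fun a ν => substDag R.D (fun ρ n => γ a (Fin.snoc ρ n)) ν

/-- The map `χ` on "polynomial duals": given
`φ : Hom(F[λ₁,…,λ_K], M)` (recorded through its values `φ ν` on monomials),
`chiMap DM φ` is `φ ∘ (substitution λ_{K+1} ↦ −λ₁ − ⋯ − λ_K + ∂^M)`,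
with `∂^M` moved to the left. -/
noncomputable def chiMap {K : ℕ} (DM : M →ₗ[F] M) (φ : (Fin K → ℕ) → M) :
    (Fin (K+1) → ℕ) → M :=
  fun ν =>
    ∑ m ∈ Finset.Iic (fun _ : Fin K => ν (Fin.last K)),
      if wt m ≤ ν (Fin.last K) then
        (((-1 : F)^(wt m)) * (mnom m (ν (Fin.last K) - wt m) : F)) •
          ((DM ^ (ν (Fin.last K) - wt m)) (φ (fun r => Fin.init ν r + m r)))
      else 0

section Product

variable (F) {N : Type*} [CommRing N] [Algebra F N]

/-- The exterior multiplication of basic cochains, in coefficient form. -/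
noncomputable def wedge {h k : ℕ}
    (α : (Fin h → A) → (Fin h → ℕ) → N) (β : (Fin k → A) → (Fin k → ℕ) → N) :
    (Fin (h+k) → A) → (Fin (h+k) → ℕ) → N :=
  fun a ν =>
    ((h.factorial * k.factorial : F))⁻¹ •
      ∑ σ : Equiv.Perm (Fin (h+k)),
        ((Equiv.Perm.sign σ : ℤˣ) : ℤ) •
          (α (fun i => a (σ (Fin.castAdd k i))) (fun i => ν (σ (Fin.castAdd k i))) *
           β (fun i => a (σ (Fin.natAdd h i))) (fun i => ν (σ (Fin.natAdd h i))))

/-- Contraction of a basic cochain by (a generator of) a basic `h`-chain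
`b ⊗ φ ∈ A^{⊗h} ⊗ Hom(F[λ₁,…,λ_h], N)`. -/
noncomputable def iotaG {h k : ℕ} (b : Fin h → A) (φ : (Fin h → ℕ) → N)
    (γ : (Fin (h + k) → A) → (Fin (h + k) → ℕ) → N) :
    (Fin k → A) → (Fin k → ℕ) → N :=
  fun a ν => ∑ᶠ ρ : Fin h → ℕ, φ ρ * γ (Fin.append b a) (Fin.append ρ ν)

/-- The action of `∂` on (generators of) the space of basic `h`-chains:
`∂(a ⊗ φ) = a ⊗ ((−λ₁^* − ⋯ − λ_h^* + ∂)φ)`. -/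
def chainD (R : LCAMod F L N) {h : ℕ} (φ : (Fin h → ℕ) → N) : (Fin h → ℕ) → N :=
  fun ρ => R.D (φ ρ) - ∑ i : Fin h, φ (Function.update ρ i (ρ i + 1))

/-- Contraction by a basic 1-chain `a₀ ⊗ m(x)`, where `m(x) = ∑ m_k x^k` is recorded
by its coefficient function `m : ℕ → N` (formula (3.23) of the paper, using the
pairing `⟨x^p, λ^q⟩ = q! δ_{p,q}`). -/
noncomputable def iota1 {k : ℕ} (a₀ : A) (m : ℕ → N)
    (γ : (Fin (k+1) → A) → (Fin (k+1) → ℕ) → N) : (Fin k → A) → (Fin k → ℕ) → N :=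
  fun a ν => ∑ᶠ q : ℕ, (q.factorial : F) • (m q * γ (Fin.cons a₀ a) (Fin.cons q ν))

/-- The Lie derivative `L_ξ = δ ∘ ι_ξ + ι_ξ ∘ δ` along a basic 1-chain. -/
noncomputable def lie1 (R : LCAMod F L N) {k : ℕ} (a₀ : A) (m : ℕ → N)
    (γ : (Fin (k+1) → A) → (Fin (k+1) → ℕ) → N) : (Fin (k+1) → A) → (Fin (k+1) → ℕ) → N :=
  deltaRaw L R (iota1 F a₀ m γ) + iota1 F a₀ m (deltaRaw L R γ)

end Product

end LCC

/-!
Regard `M[λ₁, …, λₖ₊₁]` as `V[μ]`, where `V = M[λ₁, …, λₖ]` and `μ = λₖ₊₁`. Then `ψ` is the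
evaluation of `μ` at the operator `T = -(∂ + λ₁ + ⋯ + λₖ)` of `V`, while `∂` acts on cochains as
multiplication by `μ - T`. This polynomial is monic in `μ`, so division with remainder shows that
the kernel of the evaluation is the image of `μ - T`, and multiplication by `μ - T` is injective.
Injectivity transfers sesquilinearity and skew-symmetry from a cochain to its quotient by `μ - T`,
and division with remainder shows that permuting the variables of `f` before evaluating depends
only on the evaluation of `f`, which is the skew-symmetry of `ψ(γ)`. If `p(∂)` annihilates an
argument `aᵢ`, then `p(-λᵢ)` annihilates the value of `γ`, so that this value is zero.
-/

namespace LCC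

section LambdaPoly

variable {𝕜 ι M : Type*} [Semiring 𝕜]

section AddCommMonoid

variable [AddCommMonoid M] [Module 𝕜 M]

/-- The space `M[λ_i : i ∈ ι]` of polynomials with coefficients in `M`, encoded by the finitely
supported family of the coefficients of the monomials `λ^ν`. As `ι` is finite in the applications,
all functions `ν : ι → ℕ` are allowed as exponents. -/
abbrev LambdaPoly (ι M : Type*) [Zero M] := (ι → ℕ) →₀ M

/-- The action of an endomorphism of `M` on polynomials, coefficient by coefficient. -/
noncomputable def coeffMap (D : Module.End 𝕜 M) : Module.End 𝕜 (LambdaPoly ι M) :=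
  Finsupp.mapRange.linearMap D

@[simp]
lemma coeffMap_single (D : Module.End 𝕜 M) (ν : ι → ℕ) (m : M) :
    coeffMap D (Finsupp.single ν m) = Finsupp.single ν (D m) :=
  Finsupp.mapRange_single (hf := map_zero D)

@[simp]
lemma coeffMap_apply (D : Module.End 𝕜 M) (f : LambdaPoly ι M) (ν : ι → ℕ) :
    coeffMap D f ν = D (f ν) :=
  rfl

/-- The permutation of the variables of a polynomial, in the direction used by the skew-symmetry of
basic cochains: the coefficient of `λ^ν` becomes the former coefficient of `λ^(ν ∘ σ)`. -/
noncomputable def permVars (σ : Equiv.Perm ι) : LambdaPoly ι M ≃ₗ[𝕜] LambdaPoly ι M :=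
  Finsupp.domLCongr (Equiv.arrowCongr σ (Equiv.refl ℕ))

lemma permVars_apply (σ : Equiv.Perm ι) (f : LambdaPoly ι M) (ν : ι → ℕ) :
    permVars (𝕜 := 𝕜) σ f ν = f (ν ∘ σ) :=
  rfl

lemma exists_ne_zero_forall_lt_eq_zero (i : ι) {f : LambdaPoly ι M} (hf : f ≠ 0) :
    ∃ ν, f ν ≠ 0 ∧ ∀ μ, ν i < μ i → f μ = 0 := by
  obtain ⟨ν, hν, hmax⟩ :=
    f.support.exists_max_image (fun ν => ν i) (Finsupp.support_nonempty_iff.mpr hf)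
  refine ⟨ν, Finsupp.mem_support_iff.mp hν, fun μ hμ => ?_⟩
  by_contra h
  exact hμ.not_ge (hmax μ (Finsupp.mem_support_iff.mpr h))

section MulVar

variable [DecidableEq ι]

variable (𝕜) in
/-- Multiplication by the variable `λ_i`. -/
noncomputable def mulVar (i : ι) : Module.End 𝕜 (LambdaPoly ι M) :=
  Finsupp.lmapDomain M 𝕜 (· + Pi.single i 1)

@[simp]
lemma mulVar_single (i : ι) (ν : ι → ℕ) (m : M) :
    mulVar 𝕜 i (Finsupp.single ν m) = Finsupp.single (ν + Pi.single i 1) m :=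
  Finsupp.mapDomain_single

lemma mulVar_apply_add_single (i : ι) (f : LambdaPoly ι M) (ν : ι → ℕ) :
    mulVar 𝕜 i f (ν + Pi.single i 1) = f ν :=
  Finsupp.mapDomain_apply (add_left_injective _) f ν

lemma mulVar_apply (i : ι) (f : LambdaPoly ι M) (ν : ι → ℕ) :
    mulVar 𝕜 i f ν = if ν i = 0 then 0 else f (Function.update ν i (ν i - 1)) := by
  split_ifs with hν
  · refine Finsupp.mapDomain_of_notMem_range _ _ ?_
    rintro ⟨ρ, rfl⟩
    simp at hν
  · have h_update : Function.update ν i (ν i - 1) + Pi.single i 1 = ν := by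
      ext j
      obtain rfl | hj := eq_or_ne j i
      · simp; lia
      · simp [hj]
    rw [← mulVar_apply_add_single (𝕜 := 𝕜) i f, h_update]

lemma commute_mulVar_mulVar (i j : ι) :
    Commute (mulVar 𝕜 i : Module.End 𝕜 (LambdaPoly ι M)) (mulVar 𝕜 j) :=
  Finsupp.lhom_ext fun ν m => by simp [add_right_comm]

lemma commute_coeffMap_mulVar (D : Module.End 𝕜 M) (i : ι) :
    Commute (coeffMap D) (mulVar 𝕜 i) :=
  Finsupp.lhom_ext fun ν m => by simp

lemma mulVar_pow_apply_add_single (i : ι) (n : ℕ) (f : LambdaPoly ι M) (ν : ι → ℕ) :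
    (mulVar 𝕜 i ^ n) f (ν + Pi.single i n) = f ν := by
  induction n with
  | zero => simp
  | succ n ih =>
    rw [pow_succ', Module.End.mul_apply, Pi.single_add, ← add_assoc, mulVar_apply_add_single, ih]

end MulVar

section TotalD

variable [DecidableEq ι] [Fintype ι]

/-- The operator `∂ + ∑ i, λ_i` on polynomials, through which `∂` acts on the values of basic
cochains. -/
noncomputable def totalD (D : Module.End 𝕜 M) : Module.End 𝕜 (LambdaPoly ι M) :=
  coeffMap D + ∑ i, mulVar 𝕜 i

lemma commute_totalD_mulVar (D : Module.End 𝕜 M) (i : ι) :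
    Commute (totalD D) (mulVar 𝕜 i) :=
  (commute_coeffMap_mulVar D i).add_left
    (Commute.sum_left _ _ _ fun j _ => commute_mulVar_mulVar j i)

lemma commute_totalD_coeffMap (D : Module.End 𝕜 M) :
    Commute (totalD (ι := ι) D) (coeffMap D) :=
  (Commute.refl _).add_left
    (Commute.sum_left _ _ _ fun j _ => (commute_coeffMap_mulVar D j).symm)

lemma totalD_apply (D : Module.End 𝕜 M) (f : LambdaPoly ι M) (ν : ι → ℕ) :
    totalD D f ν =
      D (f ν) + ∑ i, if ν i = 0 then 0 else f (Function.update ν i (ν i - 1)) := by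
  simp [totalD, mulVar_apply]

lemma totalD_single (D : Module.End 𝕜 M) (ν : ι → ℕ) (m : M) :
    totalD D (Finsupp.single ν m) =
      Finsupp.single ν (D m) + ∑ i, Finsupp.single (ν + Pi.single i 1) m := by
  simp [totalD]

lemma permVars_totalD (D : Module.End 𝕜 M) (σ : Equiv.Perm ι) (f : LambdaPoly ι M) :
    permVars (𝕜 := 𝕜) σ (totalD D f) = totalD D (permVars (𝕜 := 𝕜) σ f) := by
  ext ν
  simp only [permVars_apply, totalD_apply, Function.comp_apply]
  congr 1
  refine Fintype.sum_equiv σ _ _ fun i => ?_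
  rw [← Function.update_comp_eq_of_injective _ σ.injective]

end TotalD

section Power

/-- Multiplication by the monomial `∂^(k none) * ∏ i, λ_i ^ k (some i)`, where `∂` acts through
`D`. The operators `∂` and `λ_i` thus become the images of the generators of a commutative
monoid, which gives access to the multinomial theorem. -/
noncomputable def monomialEnd (D : Module.End 𝕜 M) :
    Multiplicative (Option ι → ℕ) →* Module.End 𝕜 (LambdaPoly ι M) where
  toFun k :=
    Finsupp.lmapDomain M 𝕜 (· + fun i => k.toAdd (some i)) ∘ₗ coeffMap (D ^ k.toAdd none)
  map_one' := Finsupp.lhom_ext fun ν m => by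
    simp [Finsupp.mapDomain_single, ← Pi.zero_def]
  map_mul' k l := Finsupp.lhom_ext fun ν m => by
    simp [Finsupp.mapDomain_single, pow_add, ← Pi.add_def, add_comm, add_left_comm]

lemma monomialEnd_single (D : Module.End 𝕜 M) (k : Option ι → ℕ) (ν : ι → ℕ) (m : M) :
    monomialEnd D (.ofAdd k) (Finsupp.single ν m) =
      Finsupp.single (ν + fun i => k (some i)) ((D ^ k none) m) := by
  simp [monomialEnd, Finsupp.mapDomain_single]

section Multinomial

variable [DecidableEq ι] [Fintype ι]

lemma totalD_eq_sum_monomialEnd (D : Module.End 𝕜 M) :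
    totalD (ι := ι) D = ∑ o : Option ι, monomialEnd D (.ofAdd (Pi.single o 1)) := by
  have h_some (i : ι) : (fun j => (Pi.single (some i) 1 : Option ι → ℕ) (some j)) =
      Pi.single i 1 := by
    ext j; simp [Pi.single_apply]
  refine Finsupp.lhom_ext fun ν m => ?_
  simp [totalD_single, Fintype.sum_option, monomialEnd_single, h_some, ← Pi.zero_def]

lemma totalD_pow_single (D : Module.End 𝕜 M) (n : ℕ) (ν : ι → ℕ) (m : M) :
    (totalD D ^ n) (Finsupp.single ν m) =
      ∑ k ∈ Finset.univ.piAntidiag n, Nat.multinomial Finset.univ k •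
        Finsupp.single (ν + fun i => k (some i)) ((D ^ k none) m) := by
  have h_prod (k : Option ι → ℕ) :
      Finset.univ.noncommProd (fun o => monomialEnd D (.ofAdd (Pi.single o 1)) ^ k o)
        (fun _ _ _ _ _ => ((Commute.all _ _).map (monomialEnd D)).pow_pow _ _) =
      monomialEnd D (.ofAdd k) := by
    simp_rw [← map_pow]
    rw [← Finset.map_noncommProd _ _ (fun _ _ _ _ _ => Commute.all _ _),
      Finset.noncommProd_eq_prod]
    congr 1
    simp_rw [← ofAdd_nsmul, ← ofAdd_sum, ← Pi.single_smul, smul_eq_mul, mul_one]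
    rw [Finset.univ_sum_single]
  rw [totalD_eq_sum_monomialEnd, Finset.sum_pow_eq_sum_piAntidiag_of_commute _ _
    fun _ _ _ _ _ => (Commute.all _ _).map (monomialEnd D)]
  simp [h_prod, monomialEnd_single]

end Multinomial

variable {k : ℕ}

lemma mnom_eq_multinomial (m : Fin k → ℕ) (s : ℕ) :
    mnom m s = Nat.multinomial Finset.univ fun o : Option (Fin k) => o.elim s m := by
  simp [mnom, wt, Nat.multinomial, Fintype.sum_option, Fintype.prod_option, add_comm, mul_comm]

open scoped Classical in
lemma totalD_pow_single_apply (D : Module.End 𝕜 M) (n : ℕ) (ρ ν : Fin k → ℕ) (m : M) :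
    (totalD D ^ n) (Finsupp.single ρ m) ν =
      if ρ ≤ ν ∧ wt (ν - ρ) ≤ n then
        mnom (ν - ρ) (n - wt (ν - ρ)) • (D ^ (n - wt (ν - ρ))) m else 0 := by
  set κ : Option (Fin k) → ℕ := fun o => o.elim (n - wt (ν - ρ)) (ν - ρ)
  have h_unique (l : Option (Fin k) → ℕ) (hl : ∑ o, l o = n)
      (hν : (ρ + fun i => l (some i)) = ν) : ρ ≤ ν ∧ wt (ν - ρ) ≤ n ∧ l = κ := by
    have h_some : (fun i => l (some i)) = ν - ρ := by simp [← hν]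
    have h_wt : l none + wt (ν - ρ) = n := by rw [← hl, Fintype.sum_option, ← h_some, wt]
    refine ⟨hν ▸ le_self_add, by lia, ?_⟩
    ext (_ | i)
    · simp only [κ, Option.elim]; lia
    · exact congr_fun h_some i
  rw [totalD_pow_single, Finsupp.finsetSum_apply]
  split_ifs with h
  · have h_sum : ∑ o, κ o = n := by
      simp only [Fintype.sum_option, κ, Option.elim]
      exact Nat.sub_add_cancel h.2
    have h_add : (ρ + fun i => κ (some i)) = ν := add_tsub_cancel_of_le h.1
    rw [Finset.sum_eq_single κ]
    · rw [h_add]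
      simp [mnom_eq_multinomial, κ]
    · intro l hl hne
      have h_ne : (ρ + fun i => l (some i)) ≠ ν := fun hν =>
        hne (h_unique l (by simpa using hl) hν).2.2
      simp [h_ne]
    · simp [h_sum]
  · refine Finset.sum_eq_zero fun l hl => ?_
    have h_ne : (ρ + fun i => l (some i)) ≠ ν := fun hν =>
      have := h_unique l (by simpa using hl) hν
      h ⟨this.1, this.2.1⟩
    simp [h_ne]

end Power

section ConstLast

variable {k : ℕ}

variable (𝕜) in
/-- The inclusion `M[λ₁, …, λₖ] → M[λ₁, …, λₖ₊₁]` of the polynomials that are constant in the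
last variable. -/
noncomputable def constLast : LambdaPoly (Fin k) M →ₗ[𝕜] LambdaPoly (Fin (k + 1)) M :=
  Finsupp.lmapDomain M 𝕜 fun ν => Fin.snoc (α := fun _ => ℕ) ν 0

lemma constLast_single (ν : Fin k → ℕ) (m : M) :
    constLast 𝕜 (Finsupp.single ν m) = Finsupp.single (Fin.snoc (α := fun _ => ℕ) ν 0) m :=
  Finsupp.mapDomain_single

lemma constLast_apply (f : LambdaPoly (Fin k) M) (ν : Fin (k + 1) → ℕ) :
    constLast 𝕜 f ν = if ν (Fin.last k) = 0 then f (Fin.init ν) else 0 := by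
  split_ifs with hν
  · have h_inj : Function.Injective fun ρ : Fin k → ℕ => (Fin.snoc ρ 0 : Fin (k + 1) → ℕ) :=
      Fin.snoc_left_injective (α := fun _ => ℕ) 0
    conv_lhs => rw [← Fin.snoc_init_self ν, hν]
    exact Finsupp.mapDomain_apply h_inj f _
  · refine Finsupp.mapDomain_of_notMem_range _ _ ?_
    rintro ⟨ρ, rfl⟩
    simp at hν

lemma totalD_constLast (D : Module.End 𝕜 M) (f : LambdaPoly (Fin k) M) :
    totalD D (constLast 𝕜 f) =
      constLast 𝕜 (totalD D f) + mulVar 𝕜 (Fin.last k) (constLast 𝕜 f) := by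
  have h_snoc (ν : Fin k → ℕ) (i : Fin k) :
      (Fin.snoc (ν + Pi.single i 1) 0 : Fin (k + 1) → ℕ) =
        Fin.snoc ν 0 + Pi.single i.castSucc 1 := by
    ext j; cases j using Fin.lastCases <;> simp [Pi.single_apply]
  induction f using Finsupp.induction_linear with
  | zero => simp
  | add f g hf hg => simp [hf, hg, add_add_add_comm]
  | single ν m =>
    simp [totalD_single, constLast_single, Fin.sum_univ_castSucc, h_snoc, add_assoc]

end ConstLast

end AddCommMonoid

section AddCommGroup

variable [AddCommGroup M] [Module 𝕜 M]

section MulVar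

variable [DecidableEq ι]

lemma neg_mulVar_apply (i : ι) (f : LambdaPoly ι M) (ν : ι → ℕ) :
    (-mulVar 𝕜 i f) ν = if ν i = 0 then 0 else -f (Function.update ν i (ν i - 1)) := by
  rw [Finsupp.neg_apply, mulVar_apply, apply_ite Neg.neg, neg_zero]

open Polynomial in
lemma aeval_mulVar_injective {R : Type*} [CommRing R] [IsDomain R] [Module R M]
    [Module.IsTorsionFree R M] (i : ι) {p : R[X]} (hp : p ≠ 0) :
    Function.Injective (aeval (mulVar R i : Module.End R (LambdaPoly ι M)) p) := by
  refine (injective_iff_map_eq_zero _).mpr fun f hf => ?_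
  by_contra hne
  obtain ⟨ν, hν, hmax⟩ := exists_ne_zero_forall_lt_eq_zero i hne
  have h_coeff := DFunLike.congr_fun hf (ν + Pi.single i p.natDegree)
  have h_lower (n : ℕ) (hn : n < p.natDegree) :
      (mulVar R i ^ n) f (ν + Pi.single i p.natDegree) = 0 := by
    rw [← Nat.sub_add_cancel hn.le, Pi.single_add, ← add_assoc, mulVar_pow_apply_add_single]
    exact hmax _ (by simpa using hn)
  have h_sum : ∑ n ∈ Finset.range p.natDegree,
      (p.coeff n • mulVar R i ^ n) f (ν + Pi.single i p.natDegree) = 0 :=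
    Finset.sum_eq_zero fun n hn => by simp [h_lower n (Finset.mem_range.mp hn)]
  rw [aeval_eq_sum_range, Finset.sum_range_succ] at h_coeff
  simp_all [mulVar_pow_apply_add_single]

lemma totalD_injective [Fintype ι] [Nonempty ι] (D : Module.End 𝕜 M) :
    Function.Injective (totalD (ι := ι) D) := by
  obtain ⟨i⟩ := ‹Nonempty ι›
  refine (injective_iff_map_eq_zero _).mpr fun f hf => ?_
  by_contra hne
  obtain ⟨ν, hν, hmax⟩ := exists_ne_zero_forall_lt_eq_zero i hne
  refine hν ?_
  have h_coeff := DFunLike.congr_fun hf (ν + Pi.single i 1)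
  have h_other (j : ι) (hj : j ≠ i) : mulVar 𝕜 j f (ν + Pi.single i 1) = 0 := by
    rw [mulVar_apply]
    split_ifs
    · rfl
    · exact hmax _ (by simp [hj.symm])
  have h_top : f (ν + Pi.single i 1) = 0 := hmax _ (by simp)
  simpa [totalD, Finset.sum_eq_single i (fun j _ => h_other j), h_top,
    mulVar_apply_add_single] using h_coeff

end MulVar

section SubstLast

variable {k : ℕ}

/-- The substitution `λₖ₊₁ ↦ -(∂ + λ₁ + ⋯ + λₖ)`, with `∂` moved to the left: an operator form
of `substDag`. -/
noncomputable def substLast (D : Module.End 𝕜 M) :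
    LambdaPoly (Fin (k + 1)) M →ₗ[𝕜] LambdaPoly (Fin k) M :=
  Finsupp.lsum ℕ fun ν => ((-totalD D) ^ ν (Fin.last k)) ∘ₗ Finsupp.lsingle (Fin.init ν)

lemma substLast_single (D : Module.End 𝕜 M) (ν : Fin (k + 1) → ℕ) (m : M) :
    substLast D (Finsupp.single ν m) =
      ((-totalD D) ^ ν (Fin.last k)) (Finsupp.single (Fin.init ν) m) := by
  simp [substLast]

lemma init_add_single_castSucc (ν : Fin (k + 1) → ℕ) (i : Fin k) (n : ℕ) :
    Fin.init (ν + Pi.single i.castSucc n) = Fin.init ν + Pi.single i n := by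
  ext j; simp [Fin.init, Pi.single_apply]

lemma init_add_single_last (ν : Fin (k + 1) → ℕ) (n : ℕ) :
    Fin.init (ν + Pi.single (Fin.last k) n) = Fin.init ν := by
  ext j; simp [Fin.init]

lemma substLast_coeffMap (D : Module.End 𝕜 M) (f : LambdaPoly (Fin (k + 1)) M) :
    substLast D (coeffMap D f) = coeffMap D (substLast D f) := by
  induction f using Finsupp.induction_linear with
  | zero => simp
  | add f g hf hg => simp [hf, hg]
  | single ν m =>
    have := ((commute_totalD_coeffMap (ι := Fin k) D).neg_left.pow_left (ν (Fin.last k))).eq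
    simpa [substLast_single] using LinearMap.congr_fun this (Finsupp.single (Fin.init ν) m)

lemma substLast_mulVar_castSucc (D : Module.End 𝕜 M) (i : Fin k)
    (f : LambdaPoly (Fin (k + 1)) M) :
    substLast D (mulVar 𝕜 i.castSucc f) = mulVar 𝕜 i (substLast D f) := by
  induction f using Finsupp.induction_linear with
  | zero => simp
  | add f g hf hg => simp [hf, hg]
  | single ν m =>
    have := ((commute_totalD_mulVar D i).neg_left.pow_left (ν (Fin.last k))).eq
    simpa [substLast_single, init_add_single_castSucc] using
      LinearMap.congr_fun this (Finsupp.single (Fin.init ν) m)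

lemma substLast_mulVar_last (D : Module.End 𝕜 M) (f : LambdaPoly (Fin (k + 1)) M) :
    substLast D (mulVar 𝕜 (Fin.last k) f) = -totalD D (substLast D f) := by
  induction f using Finsupp.induction_linear with
  | zero => simp
  | add f g hf hg => simp [hf, hg, add_comm]
  | single ν m => simp [substLast_single, init_add_single_last, pow_succ']

lemma substLast_totalD (D : Module.End 𝕜 M) (f : LambdaPoly (Fin (k + 1)) M) :
    substLast D (totalD D f) = 0 := by
  simp [totalD, Fin.sum_univ_castSucc, substLast_coeffMap, substLast_mulVar_castSucc,
    substLast_mulVar_last]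

lemma exists_eq_totalD_add_constLast (D : Module.End 𝕜 M) (f : LambdaPoly (Fin (k + 1)) M) :
    ∃ g, f = totalD D g + constLast 𝕜 (substLast D f) := by
  induction f using Finsupp.induction_linear with
  | zero => exact ⟨0, by simp⟩
  | add f₁ f₂ h₁ h₂ =>
    obtain ⟨g₁, h₁⟩ := h₁
    obtain ⟨g₂, h₂⟩ := h₂
    refine ⟨g₁ + g₂, ?_⟩
    rw [map_add, map_add, map_add, add_add_add_comm, ← h₁, ← h₂]
  | single ν m =>
    rw [← Fin.snoc_init_self ν]
    generalize Fin.init ν = ρ, ν (Fin.last k) = n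
    induction n with
    | zero => exact ⟨0, by simp [substLast_single, constLast_single]⟩
    | succ n ih =>
      obtain ⟨g, hg⟩ := ih
      set r := substLast D (Finsupp.single (Fin.snoc ρ n : Fin (k + 1) → ℕ) m)
      have h_succ : Finsupp.single (Fin.snoc ρ (n + 1) : Fin (k + 1) → ℕ) m =
          mulVar 𝕜 (Fin.last k) (Finsupp.single (Fin.snoc ρ n : Fin (k + 1) → ℕ) m) := by
        rw [mulVar_single]
        congr 1
        ext j; cases j using Fin.lastCases <;> simp
      have h_comm := LinearMap.congr_fun (commute_totalD_mulVar D (Fin.last k)).eq g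
      refine ⟨mulVar 𝕜 (Fin.last k) g + constLast 𝕜 r, ?_⟩
      rw [h_succ, substLast_mulVar_last, map_add, totalD_constLast]
      simp only [Module.End.mul_apply] at h_comm
      rw [h_comm, map_neg]
      conv_lhs => rw [hg, map_add]
      abel

lemma ker_substLast (D : Module.End 𝕜 M) :
    LinearMap.ker (substLast (k := k) D) = LinearMap.range (totalD (ι := Fin (k + 1)) D) := by
  ext f
  refine ⟨fun hf => ?_, ?_⟩
  · obtain ⟨g, hg⟩ := exists_eq_totalD_add_constLast D f
    exact ⟨g, by simpa [LinearMap.mem_ker.mp hf] using hg.symm⟩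
  · rintro ⟨g, rfl⟩
    exact substLast_totalD D g

lemma substLast_permVars (D : Module.End 𝕜 M) (σ : Equiv.Perm (Fin (k + 1)))
    (f : LambdaPoly (Fin (k + 1)) M) :
    substLast D (permVars (𝕜 := 𝕜) σ f) =
      substLast D (permVars (𝕜 := 𝕜) σ (constLast 𝕜 (substLast D f))) := by
  obtain ⟨g, hg⟩ := exists_eq_totalD_add_constLast D f
  conv_lhs => rw [hg, map_add, map_add, permVars_totalD, substLast_totalD, zero_add]

end SubstLast

end AddCommGroup

end LambdaPoly

section SubstDag

variable {F M : Type*} [Field F] [AddCommGroup M] [Module F M] {k : ℕ}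
  (D : Module.End F M)

lemma substDag_add (p q : LambdaPoly (Fin (k + 1)) M) (ν : Fin k → ℕ) :
    substDag D (fun ρ n => (p + q) (Fin.snoc ρ n)) ν =
      substDag D (fun ρ n => p (Fin.snoc ρ n)) ν + substDag D (fun ρ n => q (Fin.snoc ρ n)) ν := by
  have h_fin (g : LambdaPoly (Fin (k + 1)) M) (ρ : Fin k → ℕ) (w : ℕ) :
      (Function.support fun s => ((-1 : F) ^ (w + s) * (mnom (fun r => ν r - ρ r) s : F)) •
        (D ^ s) (g (Fin.snoc ρ (w + s)))).Finite := by
    refine Set.Finite.subset (g.hasFiniteSupport.preimage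
      (f := fun s => (Fin.snoc ρ (w + s) : Fin (k + 1) → ℕ)) ?_) ?_
    · exact ((Fin.snoc_right_injective (α := fun _ => ℕ) ρ).comp
        (add_right_injective w)).injOn
    · intro s hs hg
      simp_all
  simp only [substDag, Finsupp.add_apply, map_add, smul_add]
  rw [← Finset.sum_add_distrib]
  exact Finset.sum_congr rfl fun ρ _ => finsum_add_distrib (h_fin p ρ _) (h_fin q ρ _)

lemma substDag_single (ρ : Fin k → ℕ) (n : ℕ) (m : M) (ν : Fin k → ℕ) :
    substDag D (fun ρ' n' => Finsupp.single (Fin.snoc ρ n : Fin (k + 1) → ℕ) m (Fin.snoc ρ' n')) ν =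
      (-1 : F) ^ n • (totalD D ^ n) (Finsupp.single ρ m) ν := by
  have h_snoc (ρ' : Fin k → ℕ) (n' : ℕ) :
      (Fin.snoc ρ n : Fin (k + 1) → ℕ) = Fin.snoc ρ' n' ↔ ρ = ρ' ∧ n = n' :=
    Fin.snoc_inj
  rw [totalD_pow_single_apply, ite_and]
  simp only [substDag, Finsupp.single_apply, h_snoc]
  have h_inner (ρ' : Fin k → ℕ) :
      (∑ᶠ s, ((-1 : F) ^ (wt (ν - ρ') + s) * (mnom (ν - ρ') s : F)) •
        (D ^ s) (if ρ = ρ' ∧ n = wt (ν - ρ') + s then m else 0)) =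
      if ρ = ρ' then (if wt (ν - ρ) ≤ n then (-1 : F) ^ n •
        mnom (ν - ρ) (n - wt (ν - ρ)) • (D ^ (n - wt (ν - ρ))) m else 0) else 0 := by
    by_cases hρ : ρ = ρ'
    · subst hρ
      simp only [true_and, if_true]
      split_ifs with h_wt
      · rw [finsum_eq_single _ (n - wt (ν - ρ)) fun s hs => by
          rw [if_neg (by lia), map_zero, smul_zero], Nat.add_sub_cancel' h_wt, if_pos rfl,
          mul_smul, Nat.cast_smul_eq_nsmul]
      · exact finsum_eq_zero_of_forall_eq_zero fun s => by
          rw [if_neg (by lia), map_zero, smul_zero]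
    · simp [hρ]
  refine (Finset.sum_congr rfl fun ρ' _ => h_inner ρ').trans ?_
  rw [Finset.sum_ite_eq, smul_ite, smul_ite, smul_zero]
  classical exact if_congr Finset.mem_Iic rfl rfl

lemma substDag_eq_substLast (f : LambdaPoly (Fin (k + 1)) M) :
    substDag D (fun ρ n => f (Fin.snoc ρ n)) = substLast D f := by
  ext ν
  induction f using Finsupp.induction_linear with
  | zero => simp [substDag]
  | add f g hf hg => rw [substDag_add, hf, hg, map_add, Finsupp.add_apply]
  | single ν' m =>
    rw [← Fin.snoc_init_self ν', substDag_single, substLast_single, Fin.snoc_last,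
      Fin.init_snoc, ← neg_one_smul F (totalD D), smul_pow]
    rfl

end SubstDag

section Cochain

variable {F A M : Type*} [Field F] [AddCommGroup A] [Module F A] [AddCommGroup M] [Module F M]
  {L : LCA F A} {k : ℕ}

/-- The basic cochains: a bundled form of `IsGamma`, in which multilinearity and polynomiality are
part of the type of `Γ`. -/
structure IsCochain (L : LCA F A)
    (Γ : MultilinearMap F (fun _ : Fin k => A) (LambdaPoly (Fin k) M)) : Prop where
  map_update_D : ∀ (a : Fin k → A) (i : Fin k) (x : A),
    Γ (Function.update a i (L.D x)) = -mulVar F i (Γ (Function.update a i x))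
  permVars_map_comp : ∀ (a : Fin k → A) (σ : Equiv.Perm (Fin k)),
    permVars (𝕜 := F) σ (Γ (a ∘ σ)) = ((Equiv.Perm.sign σ : ℤˣ) : ℤ) • Γ a

lemma isGamma_iff_exists_isCochain (R : LCAMod F L M)
    {γ : (Fin k → A) → (Fin k → ℕ) → M} :
    IsGamma R k γ ↔ ∃ Γ, IsCochain L Γ ∧ γ = fun a => ⇑(Γ a) := by
  constructor
  · intro h
    let Γ : MultilinearMap F (fun _ : Fin k => A) (LambdaPoly (Fin k) M) := MultilinearMap.mk'
      (fun a => Finsupp.ofSupportFinite (γ a) (h.fin a))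
      (fun a i x y => DFunLike.coe_injective (h.map_add a i x y))
      (fun a i r x => DFunLike.coe_injective (h.map_smul a i r x))
    refine ⟨Γ, ⟨fun a i x => ?_, fun a σ => ?_⟩, rfl⟩
    · ext ν
      rw [neg_mulVar_apply]
      exact h.sesq a i x ν
    · ext ν
      exact h.skew a ν σ
  · rintro ⟨Γ, hΓ, rfl⟩
    refine ⟨fun a i x y => ?_, fun a i r x => ?_, fun a => (Γ a).hasFiniteSupport,
      fun a i x ν => ?_, fun a ν σ => ?_⟩
    · simp
    · simp
    · rw [hΓ.map_update_D, neg_mulVar_apply]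
    · exact DFunLike.congr_fun (hΓ.permVars_map_comp a σ) ν

lemma gammaD_coe (R : LCAMod F L M)
    (Γ : MultilinearMap F (fun _ : Fin k => A) (LambdaPoly (Fin k) M)) :
    GammaD R (fun a => ⇑(Γ a)) = fun a => ⇑(totalD R.D (Γ a)) := by
  ext a ν
  rw [totalD_apply]
  rfl

lemma psiRaw_coe (R : LCAMod F L M)
    (Γ : MultilinearMap F (fun _ : Fin (k + 1) => A) (LambdaPoly (Fin (k + 1)) M)) :
    psiRaw R (fun a => ⇑(Γ a)) = fun a => ⇑(substLast R.D (Γ a)) :=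
  funext fun a => substDag_eq_substLast R.D (Γ a)

namespace IsCochain

variable {Γ : MultilinearMap F (fun _ : Fin k => A) (LambdaPoly (Fin k) M)}

open Polynomial in
lemma aeval_neg_mulVar_map_update (hΓ : IsCochain L Γ) (a : Fin k → A) (i : Fin k) (p : F[X])
    (x : A) :
    aeval (-mulVar (M := M) F i) p (Γ (Function.update a i x)) =
      Γ (Function.update a i (aeval L.D p x)) := by
  set ℓ := Γ.toLinearMap a i
  have h_pow (n : ℕ) : ((-mulVar (M := M) F i) ^ n) ∘ₗ ℓ = ℓ ∘ₗ (L.D ^ n) :=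
    Module.End.commute_pow_left_of_commute
      (LinearMap.ext fun y => by simpa [ℓ] using (hΓ.map_update_D a i y).symm) n
  change aeval (-mulVar (M := M) F i) p (ℓ x) = ℓ (aeval L.D p x)
  induction p using Polynomial.induction_on' with
  | add p q hp hq => simp [hp, hq]
  | monomial n c =>
    simpa [aeval_monomial, Module.algebraMap_end_apply] using
      congr_arg (c • ·) (LinearMap.congr_fun (h_pow n) x)

open Polynomial in
lemma eq_zero_of_isTor (hΓ : IsCochain L Γ) {a : Fin k → A} {i : Fin k}
    (ha : IsTor L (a i)) : Γ a = 0 := by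
  obtain ⟨p, hp, hpa⟩ := ha
  have h_aeval := hΓ.aeval_neg_mulVar_map_update a i p (a i)
  rw [hpa, Γ.map_update_zero, Function.update_eq_self] at h_aeval
  refine aeval_mulVar_injective (R := F) i (p := p.comp (-X)) ?_ ?_
  · rwa [Ne, comp_neg_X_eq_zero_iff]
  · rw [aeval_comp, map_neg, aeval_X, h_aeval, map_zero]

lemma exists_eq_totalD [NeZero k] (hΓ : IsCochain L Γ) (D : Module.End F M)
    (h : ∀ a, Γ a ∈ LinearMap.range (totalD D)) :
    ∃ Θ, IsCochain L Θ ∧ ∀ a, Γ a = totalD D (Θ a) := by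
  have h_inj := totalD_injective (ι := Fin k) D
  obtain ⟨e, he⟩ := LinearMap.exists_leftInverse_of_injective _ (LinearMap.ker_eq_bot.mpr h_inj)
  have h_eq (a : Fin k → A) : Γ a = totalD D (e (Γ a)) := by
    obtain ⟨θ, hθ⟩ := h a
    rw [← hθ]
    exact congr_arg _ (LinearMap.congr_fun he θ).symm
  refine ⟨e.compMultilinearMap Γ, ⟨fun a i x => h_inj ?_, fun a σ => h_inj ?_⟩, h_eq⟩
  · have h_comm := LinearMap.congr_fun (commute_totalD_mulVar D i).eq
    simp only [Module.End.mul_apply] at h_comm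
    rw [LinearMap.compMultilinearMap_apply, LinearMap.compMultilinearMap_apply, ← h_eq,
      hΓ.map_update_D, map_neg, h_comm, ← h_eq]
  · simp only [LinearMap.compMultilinearMap_apply, ← permVars_totalD, map_zsmul, ← h_eq,
      hΓ.permVars_map_comp]

lemma isCBr_substLast
    {Γ : MultilinearMap F (fun _ : Fin (k + 1) => A) (LambdaPoly (Fin (k + 1)) M)}
    (hΓ : IsCochain L Γ) (R : LCAMod F L M) :
    IsCBr R k fun a => ⇑(substLast R.D (Γ a)) where
  map_add a i x y := by simp
  map_smul a i r x := by simp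
  fin a := (substLast R.D (Γ a)).hasFiniteSupport
  sesq₁ a i x ν := by
    rw [hΓ.map_update_D, map_neg, substLast_mulVar_castSucc, neg_mulVar_apply]
  sesq₂ a x ν := by
    rw [hΓ.map_update_D, map_neg, substLast_mulVar_last, neg_neg, totalD_apply]
  skew a ν σ := by
    have h_perm : (fun ρ n =>
        if (Fin.snoc ρ n : Fin (k + 1) → ℕ) (σ (Fin.last k)) = 0 then
          substLast R.D (Γ (a ∘ σ)) fun i => (Fin.snoc ρ n : Fin (k + 1) → ℕ) (σ i.castSucc)
        else 0) = fun ρ n =>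
        permVars (𝕜 := F) σ (constLast F (substLast R.D (Γ (a ∘ σ)))) (Fin.snoc ρ n) := by
      ext ρ n
      rw [permVars_apply, constLast_apply]
      rfl
    rw [h_perm, substDag_eq_substLast, ← substLast_permVars, hΓ.permVars_map_comp, map_zsmul,
      ← Finsupp.smul_apply, smul_smul, Int.units_coe_mul_self, one_smul]

end IsCochain

end Cochain

end LCC

open LCC in
theorem psi_lands_in_Cbar_and_kernel_is_dGamma_general
    {F : Type*} [Field F]
    {A M : Type*} [AddCommGroup A] [Module F A] [AddCommGroup M] [Module F M]
    (L : LCA F A) (R : LCAMod F L M) (k₀ : ℕ)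
    (γ : (Fin (k₀ + 1) → A) → (Fin (k₀ + 1) → ℕ) → M) (hγ : IsGamma R (k₀ + 1) γ) :
    (IsCBr R k₀ (psiRaw R γ) ∧ VanishOnTorsion L (psiRaw R γ)) ∧
    (psiRaw R γ = 0 ↔ ∃ θ : (Fin (k₀ + 1) → A) → (Fin (k₀ + 1) → ℕ) → M,
      IsGamma R (k₀ + 1) θ ∧ γ = GammaD R θ) := by
  obtain ⟨Γ, hΓ, rfl⟩ := (isGamma_iff_exists_isCochain R).mp hγ
  rw [psiRaw_coe]
  refine ⟨⟨hΓ.isCBr_substLast R, ?_⟩, ?_, ?_⟩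
  · rintro a ν ⟨i, hi⟩
    simp [hΓ.eq_zero_of_isTor hi]
  · intro h
    have h_range (a : Fin (k₀ + 1) → A) : Γ a ∈ LinearMap.range (totalD R.D) := by
      rw [← ker_substLast, LinearMap.mem_ker]
      exact DFunLike.coe_injective (congr_fun h a)
    obtain ⟨Θ, hΘ, h_eq⟩ := hΓ.exists_eq_totalD R.D h_range
    refine ⟨_, (isGamma_iff_exists_isCochain R).mpr ⟨Θ, hΘ, rfl⟩, ?_⟩
    simp only [gammaD_coe, h_eq]
  · rintro ⟨θ, hθ, h⟩
    obtain ⟨Θ, -, rfl⟩ := (isGamma_iff_exists_isCochain R).mp hθ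
    rw [gammaD_coe] at h
    have h_eq (a : Fin (k₀ + 1) → A) : Γ a = totalD R.D (Θ a) :=
      DFunLike.coe_injective (congr_fun h a)
    ext a ν
    simp [h_eq, substLast_totalD]

open LCC in
/-- For every `k ≥ 1` and every basic cochain `γ̃ ∈ Γ̃^k(A,M)`:
(a) `ψ^k(γ̃)` lies in `C̄^k(A,M)` (it is a `k`-`λ`-bracket vanishing on torsion
elements); (b) the kernel of `ψ^k` is exactly `∂Γ̃^k(A,M)`, so `ψ^k` induces an
injective `F`-linear map `Γ^k = Γ̃^k/∂Γ̃^k ↪ C̄^k ⊆ C^k`.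
(Here `k = k₀ + 1` so that `k ≥ 1`.) -/
theorem psi_lands_in_Cbar_and_kernel_is_dGamma
    {F : Type*} [Field F] [CharZero F]
    {A M : Type*} [AddCommGroup A] [Module F A] [AddCommGroup M] [Module F M]
    (L : LCA F A) (R : LCAMod F L M) (k₀ : ℕ)
    (γ : (Fin (k₀+1) → A) → (Fin (k₀+1) → ℕ) → M) (hγ : IsGamma R (k₀+1) γ) :
    (IsCBr R k₀ (psiRaw R γ) ∧ VanishOnTorsion L (psiRaw R γ)) ∧
    (psiRaw R γ = 0 ↔ ∃ θ : (Fin (k₀+1) → A) → (Fin (k₀+1) → ℕ) → M,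
      IsGamma R (k₀+1) θ ∧ γ = GammaD R θ) :=
  psi_lands_in_Cbar_and_kernel_is_dGamma_general L R k₀ γ hγ
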